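/- arXiv:1203.0686 — 6 statements merged into one kernel-verified Lean document; each statement's English description precedes it below -/
import Mathlib

section
/- Every compact ultrametric space (X,d) is 1-monotone: there exists a linear order ≤ on X such that for all a,b ∈ X with a ≤ b, the diameter of the closed order interval {x : a ≤ x ≤ b} is at most d(a,b). -/
/-!
Two points `a` and `b` at distance `r > 0` have disjoint open balls of radius `r`. Order `a` and
`b` as these two balls are ordered in a fixed linear order on the subsets of `X`. If `a < b < c`,
then `dist a c < dist a b = dist b c = r` is impossible, since `a` and `c` would have the same
ball of radius `r`, and it would lie both below and above that of `b`. Hence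
`dist a c = max (dist a b) (dist b c)`, so the points between `a` and `c` lie in the closed ball
about `a` of radius `dist a c`, whose diameter is at most its radius.
-/

open Metric

section

variable {X : Type*} [PseudoMetricSpace X]

/-- The open ball of radius `r` about `a` together with its centre. For `r > 0` this is the open
ball; at `r = 0` it is `{a}` rather than `∅`, so that distinct points at distance `0` can still be
told apart. -/
def pointedBall (a : X) (r : ℝ) : Set X :=
  insert a (ball a r)

/-- The order on points induced by an order `s` on sets: `a` and `b` are compared through their
pointed balls of radius `dist a b`. -/
def pointedBallLT (s : Set X → Set X → Prop) (a b : X) : Prop :=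
  s (pointedBall a (dist a b)) (pointedBall b (dist a b))

theorem eq_of_pointedBall_dist_eq {a b : X}
    (h : pointedBall a (dist a b) = pointedBall b (dist a b)) : a = b := by
  have ha : a ∈ pointedBall b (dist a b) := h ▸ Set.mem_insert a _
  exact ha.resolve_right (lt_irrefl (dist a b))

variable [IsUltrametricDist X] {s : Set X → Set X → Prop} {a b c : X}

theorem pointedBall_eq_of_dist_lt {r : ℝ} (h : dist a b < r) :
    pointedBall a r = pointedBall b r := by
  have hr : 0 < r := dist_nonneg.trans_lt h
  rw [pointedBall, pointedBall, Set.insert_eq_of_mem (mem_ball_self hr),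
    Set.insert_eq_of_mem (mem_ball_self hr), IsUltrametricDist.ball_eq_of_mem (mem_ball'.2 h)]

theorem pointedBallLT.dist_eq_max [Std.Asymm s] (hab : pointedBallLT s a b)
    (hbc : pointedBallLT s b c) : dist a c = max (dist a b) (dist b c) := by
  by_cases heq : dist a b = dist b c
  · refine (dist_triangle_max a b c).antisymm ?_
    rw [← heq, max_self]
    by_contra! hlt
    unfold pointedBallLT at hab hbc
    rw [← heq, ← pointedBall_eq_of_dist_lt hlt] at hbc
    exact asymm_of s hab hbc
  · exact IsUltrametricDist.dist_eq_max_of_dist_ne_dist a b c heq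

theorem pointedBallLT.trans [IsStrictOrder (Set X) s] (hab : pointedBallLT s a b)
    (hbc : pointedBallLT s b c) : pointedBallLT s a c := by
  have hac : dist a c = max (dist a b) (dist b c) := hab.dist_eq_max hbc
  unfold pointedBallLT at *
  rcases lt_trichotomy (dist a b) (dist b c) with hlt | heq | hgt
  · rwa [hac, max_eq_right hlt.le, pointedBall_eq_of_dist_lt hlt]
  · rw [← heq] at hbc
    rw [hac, ← heq, max_self]
    exact trans_of s hab hbc
  · rwa [hac, max_eq_left hgt.le, ← pointedBall_eq_of_dist_lt hgt]

theorem isStrictTotalOrder_pointedBallLT [IsStrictTotalOrder (Set X) s] :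
    IsStrictTotalOrder X (pointedBallLT s) where
  irrefl a := irrefl_of s (pointedBall a (dist a a))
  trans _ _ _ := pointedBallLT.trans
  trichotomous a b hab hba := by
    rw [pointedBallLT, dist_comm b a] at hba
    exact eq_of_pointedBall_dist_eq (Std.Trichotomous.trichotomous (r := s) _ _ hab hba)

theorem diam_le_radius_of_subset_closedBall {t : Set X} {r : ℝ} (hr : 0 ≤ r)
    (ht : t ⊆ closedBall a r) : diam t ≤ r :=
  diam_le_of_forall_dist_le hr fun x hx y hy ↦
    (dist_triangle_max x a y).trans (max_le (ht hx) (mem_closedBall'.1 (ht hy)))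

end

theorem compact_ultrametric_one_monotone_general
    {X : Type*} [PseudoMetricSpace X] [IsUltrametricDist X] :
    ∃ r : LinearOrder X,
      ∀ a b : X, r.le a b → Metric.diam {x | r.le a x ∧ r.le x b} ≤ dist a b := by
  classical
  have := isStrictTotalOrder_pointedBallLT (X := X) (s := WellOrderingRel)
  refine ⟨linearOrderOfSTO (pointedBallLT WellOrderingRel), fun a b _ ↦ ?_⟩
  refine diam_le_radius_of_subset_closedBall (a := a) dist_nonneg ?_
  rintro x ⟨rfl | hax, rfl | hxb⟩
  · exact mem_closedBall_self dist_nonneg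
  · exact mem_closedBall_self dist_nonneg
  · exact mem_closedBall'.2 le_rfl
  · exact mem_closedBall'.2 ((le_max_left _ _).trans (hax.dist_eq_max hxb).ge)

/-- Every compact ultrametric space `(X,d)` is `1`-monotone: there exists a
linear order `≤` on `X` such that for all `a,b ∈ X` with `a ≤ b`, the diameter of the closed
order interval `{x : a ≤ x ≤ b}` is at most `d(a,b)`. -/
theorem compact_ultrametric_one_monotone
    {X : Type*} [MetricSpace X] [CompactSpace X] [IsUltrametricDist X] :
    ∃ r : LinearOrder X,
      ∀ a b : X, r.le a b → Metric.diam {x | r.le a x ∧ r.le x b} ≤ dist a b :=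
  compact_ultrametric_one_monotone_general
end

section
/- For every real number r there exists a separable metric space X with Hausdorff dimension at least r such that no uniformly continuous function f : X → ℝ has image equal to a non-degenerate closed interval [a,b] (a < b). -/
open scoped ENNReal

/-!
Call a family of sequences `Φ i : ℕ → ℕ` evading if every `g : ℕ → ℕ` differs everywhere from some
`Φ i`. Arrange the entries of each `Φ i` in blocks whose lengths `b k` grow superexponentially. In
the product metric, a set of diameter at most `2 ^ -(k + 1)` determines the `k`-th block of its
points. If the family were null for some Hausdorff measure, it would have a cover with at most
`b k` sets of each scale `k`; reserving one entry of the `k`-th block for each of them would give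
a `g` that agrees somewhere with every `Φ i`. The family therefore has infinite Hausdorff dimension.

A uniformly continuous function extends to the closure and then, by Tietze, to the whole space, so
it remains to find an evading family which no continuous real function on Baire space maps onto an
interval. If some evading family has fewer than `𝔠` members, its cardinality suffices. Otherwise
no nonempty product of finite discrete spaces is a union of fewer than `𝔠` closed nowhere dense
sets (Bartoszyński), so a recursion of length `𝔠` can choose, for each continuous `F`, interval
`[a, b]` and `g`, a value `y ∈ [a, b]` that `F` will never take on the family, and a sequence
which differs from `g` everywhere and respects all the values excluded so far.
-/

open Set Filter Topology Cardinal MeasureTheory Measure Metric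

universe u v

/-- A family of functions is evading if no single guess `g` agrees somewhere with each member. The
index type `A` is arbitrary so that the arguments can be rearranged into blocks. -/
def IsEvading {ι A : Type*} (Φ : ι → A → ℕ) : Prop :=
  ∀ g : A → ℕ, ∃ i, ∀ a, Φ i a ≠ g a

/-- Every `ι`-indexed family in Baire space is guessed by a single `g`, in the sense that `g` agrees
somewhere with each member. For infinite `ι` this says that `ι` has fewer than `cov(ℳ)` elements,
where `cov(ℳ)` is the covering number of the meagre ideal. -/
def Guessable (ι : Type*) : Prop :=
  ∀ Φ : ι → ℕ → ℕ, ∃ g : ℕ → ℕ, ∀ i, ∃ n, Φ i n = g n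

theorem not_guessable_iff {ι : Type*} : ¬ Guessable ι ↔ ∃ Φ : ι → ℕ → ℕ, IsEvading Φ := by
  simp [Guessable, IsEvading]

theorem IsEvading.comp_injective {ι A B : Type*} {Φ : ι → A → ℕ} (hΦ : IsEvading Φ)
    {e : B → A} (he : Function.Injective e) : IsEvading fun i ↦ Φ i ∘ e := by
  intro g
  obtain ⟨i, hi⟩ := hΦ (Function.extend e g 0)
  exact ⟨i, fun b ↦ by simpa [he.extend_apply] using hi (e b)⟩

namespace Guessable

variable {ι : Type*}

theorem of_prod_nat (h : Guessable (ι × ℕ)) : Guessable ι := fun Φ ↦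
  let ⟨g, hg⟩ := h (Φ ∘ Prod.fst)
  ⟨g, fun i ↦ hg (i, 0)⟩

theorem exists_forall_exists_eq (h : Guessable ι) {β : ℕ → Type*} [∀ n, Countable (β n)]
    [∀ n, Nonempty (β n)] (Φ : ι → ∀ n, β n) : ∃ g : ∀ n, β n, ∀ i, ∃ n, Φ i n = g n := by
  choose e he using fun n ↦ exists_injective_nat (β n)
  obtain ⟨g, hg⟩ := h fun i n ↦ e n (Φ i n)
  refine ⟨fun n ↦ Function.invFun (e n) (g n), fun i ↦ ?_⟩
  obtain ⟨n, hn⟩ := hg i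
  exact ⟨n, by simp only [← hn, Function.leftInverse_invFun (he n) (Φ i n)]⟩

theorem exists_monotone_frequently_le (h : Guessable (ι × ℕ)) (φ : ι → ℕ → ℕ) :
    ∃ ψ : ℕ → ℕ, Monotone ψ ∧ ∀ i, ∃ᶠ n in atTop, φ i n ≤ ψ n := by
  obtain ⟨g, hg⟩ := h fun p n ↦ φ p.1 (n + p.2)
  refine ⟨partialSups g, (partialSups g).monotone, fun i ↦ frequently_atTop.2 fun N ↦ ?_⟩
  obtain ⟨n, hn⟩ := hg (i, N)
  exact ⟨n + N, by omega, hn.trans_le (le_partialSups_of_le g (by omega))⟩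

theorem exists_strictMono_frequently_le (h : Guessable (ι × ℕ)) (φ : ι → ℕ → ℕ) :
    ∃ m : ℕ → ℕ, StrictMono m ∧ ∀ i, ∃ᶠ n in atTop, φ i (m n) ≤ m (n + 1) := by
  let φ' i := partialSups (φ i)
  obtain ⟨ψ, hψ, hφψ⟩ := h.exists_monotone_frequently_le fun i x ↦ φ' i (φ' i x)
  let m n := (fun x ↦ x + 1 + ψ x)^[n] 0
  have m_succ n : m (n + 1) = m n + 1 + ψ (m n) := Function.iterate_succ_apply' _ n 0
  have hm : StrictMono m := strictMono_nat_of_lt_succ fun n ↦ by have := m_succ n; omega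
  refine ⟨m, hm, fun i ↦ frequently_atTop.2 fun N ↦ ?_⟩
  obtain ⟨x, hNx, hx⟩ := frequently_atTop.1 (hφψ i) (m N)
  obtain ⟨n, hnx, hxn⟩ : ∃ n, m n ≤ x ∧ x < m (n + 1) := by
    have hx : x ∈ ⋃ n, Ico (m n) (m (Order.succ n)) := by
      rw [iUnion_Ico_map_succ_eq_Ici (fun n ↦ hm.monotone (Nat.zero_le n))
        hm.not_bddAbove_range_of_isSuccArchimedean]
      exact Nat.zero_le x
    simpa using hx
  have hNn : N ≤ n := Nat.lt_succ_iff.1 (hm.lt_iff_lt.1 (hNx.trans_lt hxn))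
  have le_φ' y : φ i y ≤ φ' i y := le_partialSups (φ i) y
  by_cases hcap : φ' i (m n) ≤ m (n + 1)
  · exact ⟨n, hNn, (le_φ' _).trans hcap⟩
  · refine ⟨n + 1, by omega, ?_⟩
    calc φ i (m (n + 1)) ≤ φ' i (m (n + 1)) := le_φ' _
      _ ≤ φ' i (φ' i x) :=
        (φ' i).monotone ((not_le.1 hcap).le.trans ((φ' i).monotone hnx))
      _ ≤ ψ x := hx
      _ ≤ ψ (m (n + 1)) := hψ hxn.le
      _ ≤ m (n + 1 + 1) := by rw [m_succ (n + 1)]; omega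

end Guessable

theorem exists_injective_forall_mem_of_lt_card {α : Type*} {T : ℕ → Finset α}
    (hT : ∀ j, j < (T j).card) : ∃ f : ℕ → α, Function.Injective f ∧ ∀ j, f j ∈ T j := by
  classical
  refine (Finset.all_card_le_biUnion_card_iff_exists_injective T).1 fun s ↦ ?_
  rcases s.eq_empty_or_nonempty with rfl | hs
  · simp
  calc s.card ≤ (Finset.range (s.max' hs + 1)).card :=
        Finset.card_le_card fun j hj ↦ Finset.mem_range_succ_iff.2 (s.le_max' j hj)
    _ = s.max' hs + 1 := Finset.card_range _
    _ ≤ (T (s.max' hs)).card := hT _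
    _ ≤ (s.biUnion T).card := Finset.card_le_card (Finset.subset_biUnion_of_mem T (s.max'_mem hs))

theorem exists_forall_eq_of_pairwise_disjoint {ι A : Type*} {β : A → Type*} [∀ a, Nonempty (β a)]
    {S : ι → Set A} (hS : Pairwise (Function.onFun Disjoint S)) (x : ι → ∀ a, β a) :
    ∃ z : ∀ a, β a, ∀ i, ∀ a ∈ S i, z a = x i a := by
  have (a : A) : ∃ c : β a, ∀ i, a ∈ S i → c = x i a := by
    by_cases ha : ∃ i, a ∈ S i
    · obtain ⟨i, hi⟩ := ha
      refine ⟨x i a, fun j hj ↦ ?_⟩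
      rw [hS.eq (not_disjoint_iff.2 ⟨a, hi, hj⟩)]
    · exact ⟨Classical.arbitrary _, fun i hi ↦ (ha ⟨i, hi⟩).elim⟩
  choose z hz using this
  exact ⟨z, fun i a ↦ hz a i⟩

section Product

variable {β : ℕ → Type*} [∀ n, TopologicalSpace (β n)] [∀ n, DiscreteTopology (β n)]
  {D : Set (∀ n, β n)}

theorem exists_cylinder_subset_of_isOpen (hD : IsOpen D) {x : ∀ n, β n} (hx : x ∈ D) :
    ∃ n, PiNat.cylinder x n ⊆ D := by
  obtain ⟨_, ⟨y, n, rfl⟩, hxy, hyD⟩ :=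
    (PiNat.isTopologicalBasis_cylinders (E := β)).exists_subset_of_mem_open hx hD
  exact ⟨n, by rwa [PiNat.mem_cylinder_iff_eq.1 hxy]⟩

theorem dense_iff_forall_cylinder_inter_nonempty :
    Dense D ↔ ∀ (x : ∀ n, β n) (n : ℕ), (PiNat.cylinder x n ∩ D).Nonempty := by
  refine ⟨fun h x n ↦ h.inter_open_nonempty _ (PiNat.isOpen_cylinder _ x n)
    ⟨x, PiNat.self_mem_cylinder x n⟩, fun h ↦ dense_iff_inter_open.2 ?_⟩
  rintro U hU ⟨x, hx⟩
  obtain ⟨n, hn⟩ := exists_cylinder_subset_of_isOpen hU hx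
  exact (h x n).mono (inter_subset_inter_left D hn)

theorem dense_preimage_updateFinset (hD : Dense D) (m : ℕ) (w : ∀ q : Finset.range m, β q) :
    Dense ((Function.updateFinset · (Finset.range m) w) ⁻¹' D) := by
  rw [dense_iff_forall_cylinder_inter_nonempty] at hD ⊢
  intro x n
  obtain ⟨y, hy, hyD⟩ := hD (Function.updateFinset x (Finset.range m) w) (max m n)
  refine ⟨Function.updateFinset y (Finset.range m) ((Finset.range m).restrict x),
    fun q hq ↦ ?_, ?_⟩
  · by_cases hqm : q < m
    · simp [Function.updateFinset, hqm]
    · simpa [Function.updateFinset, hqm] using hy q (by simp [hq])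
  · have hyw : (Finset.range m).restrict y = w := by
      funext ⟨q, hq⟩
      simpa [Function.updateFinset, Finset.mem_range.1 hq] using
        hy q (by simp [Finset.mem_range.1 hq])
    rwa [mem_preimage, ← hyw, Function.updateFinset_updateFinset_of_subset subset_rfl,
      Function.updateFinset_restrict]

theorem exists_mem_forall_mem_of_eq_on_Ico [∀ n, Finite (β n)] [∀ n, Nonempty (β n)]
    (hDo : IsOpen D) (hD : Dense D) {S : Set (∀ n, β n)} (hS : Dense S) (m : ℕ) :
    ∃ x ∈ S, ∃ M, ∀ z : ∀ n, β n, (∀ q ∈ Ico m M, z q = x q) → z ∈ D := by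
  let E (w : ∀ q : Finset.range m, β q) : Set (∀ n, β n) :=
    (Function.updateFinset · (Finset.range m) w) ⁻¹' D
  have hEo w : IsOpen (E w) := hDo.preimage <| continuous_pi fun q ↦ by
    unfold Function.updateFinset
    split_ifs <;> fun_prop
  have hE : Dense (⋂ w, E w) :=
    dense_iInter_of_isOpen hEo fun w ↦ dense_preimage_updateFinset hD m w
  obtain ⟨x, hx, hxS⟩ := hS.inter_open_nonempty _ (isOpen_iInter_of_finite hEo) hE.nonempty
  obtain ⟨M, hM⟩ := exists_cylinder_subset_of_isOpen (isOpen_iInter_of_finite hEo) hx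
  refine ⟨x, hxS, M, fun z hz ↦ ?_⟩
  have hu : Function.updateFinset z (Finset.range m) ((Finset.range m).restrict x) ∈
      PiNat.cylinder x M := by
    intro q hqM
    by_cases hqm : q < m
    · simp [Function.updateFinset, hqm]
    · simpa [Function.updateFinset, hqm] using hz q ⟨not_lt.1 hqm, hqM⟩
  have hzD := mem_iInter.1 (hM hu) ((Finset.range m).restrict z)
  rwa [mem_preimage, Function.updateFinset_updateFinset_of_subset subset_rfl,
    Function.updateFinset_restrict] at hzD

end Product

theorem Guessable.nonempty_iInter {ι : Type*} (h : Guessable (ι × ℕ)) {β : ℕ → Type*}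
    [∀ n, TopologicalSpace (β n)] [∀ n, DiscreteTopology (β n)] [∀ n, Finite (β n)]
    [∀ n, Nonempty (β n)] {D : ι → Set (∀ n, β n)} (hDo : ∀ i, IsOpen (D i))
    (hD : ∀ i, Dense (D i)) : (⋂ i, D i).Nonempty := by
  let x := TopologicalSpace.denseSeq (∀ n, β n)
  have (i : ι) (l : ℕ) : ∃ k M, ∀ z : ∀ n, β n, (∀ q ∈ Ico l M, z q = x k q) → z ∈ D i := by
    obtain ⟨_, ⟨k, rfl⟩, hk⟩ := exists_mem_forall_mem_of_eq_on_Ico (hDo i) (hD i)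
      (TopologicalSpace.denseRange_denseSeq _) l
    exact ⟨k, hk⟩
  choose k M hkM using this
  obtain ⟨m, hm, hMm⟩ := h.exists_strictMono_frequently_le M
  choose a ha hMa using fun i ↦ extraction_of_frequently_atTop (hMm i)
  -- The `j`-th guess names `j + 1` intervals, so distinct intervals can be selected from them.
  have (j : ℕ) : Countable (Fin (j + 1) ↪ ℕ) := DFunLike.coe_injective.countable
  have (j : ℕ) : Nonempty (Fin (j + 1) ↪ ℕ) := ⟨Fin.valEmbedding⟩
  obtain ⟨G, hG⟩ := h.of_prod_nat.exists_forall_exists_eq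
    (β := fun j ↦ (Fin (j + 1) ↪ ℕ) × (Fin (j + 1) → ℕ)) fun i j ↦
      (Fin.valEmbedding.trans ⟨a i, (ha i).injective⟩, fun t ↦ k i (m (a i t)))
  obtain ⟨f, hf, hfG⟩ := exists_injective_forall_mem_of_lt_card
    (T := fun j ↦ Finset.univ.map (G j).1) (by simp)
  choose t ht using fun j ↦ by simpa using hfG j
  have hdisj : Pairwise (Function.onFun Disjoint fun j ↦ Ico (m (f j)) (m (f j + 1))) :=
    hm.monotone.pairwise_disjoint_on_Ico_succ.comp_of_injective hf
  obtain ⟨z, hz⟩ := exists_forall_eq_of_pairwise_disjoint hdisj fun j ↦ x ((G j).2 (t j))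
  refine ⟨z, mem_iInter.2 fun i ↦ ?_⟩
  obtain ⟨j, hj⟩ := hG i
  have hfj : f j = a i (t j) := by rw [← ht j, ← hj]; rfl
  refine hkM i (m (f j)) z fun q hq ↦ ?_
  rw [hz j q ⟨hq.1, hq.2.trans_le (hfj ▸ hMa i (t j))⟩, ← hj, hfj]

/-- The sequences in `{0, 1, 2}` that differ from `g` everywhere, as a compact product of finite
discrete spaces. Three letters are used so that any two such products have a common sequence. -/
abbrev AvoidingBranch (g : ℕ → ℕ) : Type := ∀ n, {c : Fin 3 // (c : ℕ) ≠ g n}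

theorem exists_fin_three_ne_ne (k l : ℕ) : ∃ c : Fin 3, (c : ℕ) ≠ k ∧ (c : ℕ) ≠ l := by
  by_contra! h
  have h₀ := h 0
  have h₁ := h 1
  have h₂ := h 2
  simp only [Fin.isValue, Fin.coe_ofNat_eq_mod] at h₀ h₁ h₂
  omega

namespace AvoidingBranch

variable {g : ℕ → ℕ}

instance (n : ℕ) : Nonempty {c : Fin 3 // (c : ℕ) ≠ g n} :=
  let ⟨c, hc, _⟩ := exists_fin_three_ne_ne (g n) (g n)
  ⟨c, hc⟩

/-- A branch as a point of Baire space, forgetting the bound on its letters. -/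
def toSeq (z : AvoidingBranch g) (n : ℕ) : ℕ := (z n : Fin 3)

theorem toSeq_ne (z : AvoidingBranch g) (n : ℕ) : toSeq z n ≠ g n := (z n).2

theorem continuous_toSeq : Continuous (toSeq (g := g)) := by
  unfold toSeq
  fun_prop

theorem exists_mem_cylinder_toSeq_eq {g' : ℕ → ℕ} {n : ℕ} {z : AvoidingBranch g}
    {z' : AvoidingBranch g'} (h : ∀ i < n, (z i : Fin 3) = z' i) :
    ∃ u ∈ PiNat.cylinder z n, ∃ u' ∈ PiNat.cylinder z' n, toSeq u = toSeq u' := by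
  choose c hc hc' using fun i ↦ exists_fin_three_ne_ne (g i) (g' i)
  refine ⟨fun i ↦ if i < n then z i else ⟨c i, hc i⟩, fun i hi ↦ if_pos hi,
    fun i ↦ if i < n then z' i else ⟨c i, hc' i⟩, fun i hi ↦ if_pos hi, funext fun i ↦ ?_⟩
  by_cases hi : i < n <;> simp [toSeq, hi, h]

/-- The values `y` such that `F` is constantly `y` on a nonempty open subset of some branch. The
defining condition is the failure of what the covering theorem needs: density of `F ≠ y`. -/
def exceptionalValues {Y : Type*} (F : (ℕ → ℕ) → Y) : Set Y :=
  {y | ∃ g, ¬ Dense {z : AvoidingBranch g | F (toSeq z) ≠ y}}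

theorem countable_exceptionalValues {Y : Type*} (F : (ℕ → ℕ) → Y) :
    (exceptionalValues F).Countable := by
  let W (n : ℕ) (p : Fin n → Fin 3) : Set Y :=
    {y | ∃ (g : ℕ → ℕ) (z : AvoidingBranch g), (∀ i : Fin n, (z i : Fin 3) = p i) ∧
      ∀ u ∈ PiNat.cylinder z n, F (toSeq u) = y}
  have hW n p : (W n p).Subsingleton := by
    rintro y ⟨g, z, hzp, hz⟩ y' ⟨g', z', hzp', hz'⟩
    obtain ⟨u, hu, u', hu', huu'⟩ := exists_mem_cylinder_toSeq_eq
      (z := z) (z' := z') fun i (hi : i < n) ↦ (hzp ⟨i, hi⟩).trans (hzp' ⟨i, hi⟩).symm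
    rw [← hz u hu, ← hz' u' hu', huu']
  refine (countable_iUnion fun n ↦ countable_iUnion fun p ↦ (hW n p).countable).mono ?_
  rintro y ⟨g, hg⟩
  rw [dense_iff_forall_cylinder_inter_nonempty] at hg
  simp only [Set.Nonempty, mem_inter_iff, mem_ofPred_eq] at hg
  push Not at hg
  obtain ⟨z, n, hz⟩ := hg
  exact mem_iUnion₂.2 ⟨n, fun i ↦ z i, g, z, fun _ ↦ rfl, hz⟩

end AvoidingBranch

theorem Guessable.exists_forall_ne_and_forall_ne {ι : Type*} (h : Guessable (ι × ℕ)) {Y : Type*}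
    [TopologicalSpace Y] [T1Space Y] (g : ℕ → ℕ) {F : ι → (ℕ → ℕ) → Y} {y : ι → Y}
    (hF : ∀ i, Continuous (F i)) (hy : ∀ i, y i ∉ AvoidingBranch.exceptionalValues (F i)) :
    ∃ x : ℕ → ℕ, (∀ n, x n ≠ g n) ∧ ∀ i, F i x ≠ y i := by
  obtain ⟨z, hz⟩ := h.nonempty_iInter
    (D := fun i ↦ {z : AvoidingBranch g | F i (AvoidingBranch.toSeq z) ≠ y i})
    (fun i ↦ isOpen_compl_singleton.preimage ((hF i).comp AvoidingBranch.continuous_toSeq))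
    fun i ↦ not_not.1 fun hi ↦ hy i ⟨g, hi⟩
  exact ⟨AvoidingBranch.toSeq z, AvoidingBranch.toSeq_ne z, mem_iInter.1 hz⟩

theorem exists_forall_rel_of_mk_lt {I : Type*} {V : I → Type*} (R : ∀ i j, V i → V j → Prop)
    (step : ∀ (s : Set I) (i : I), #s < #I → ∀ v : ∀ j : s, V j,
      ∃ p : V i, R i i p p ∧ ∀ j : s, R i j p (v j) ∧ R j i (v j) p) :
    ∃ v : ∀ i, V i, ∀ i j, R i j (v i) (v j) := by
  obtain ⟨_, _, hI⟩ := exists_ord_eq_type_lt I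
  choose next hself hnext using fun i ↦ step (Iio i) i (mk_Iio_lt i hI)
  let v : ∀ i, V i := wellFounded_lt.fix fun i w ↦ next i fun j ↦ w j j.2
  have hv i : v i = next i fun j ↦ v j := WellFounded.fix_eq _ _ i
  refine ⟨v, fun i j ↦ ?_⟩
  rcases lt_trichotomy i j with hij | rfl | hji
  · rw [hv j]
    exact (hnext j (fun k ↦ v k) ⟨i, hij⟩).2
  · rw [hv i]
    exact hself i _
  · rw [hv i]
    exact (hnext i _ ⟨j, hji⟩).1

theorem mk_continuousMap_le_continuum {X Y : Type u} [TopologicalSpace X]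
    [TopologicalSpace.SeparableSpace X] [TopologicalSpace Y] [T2Space Y] (hY : #Y ≤ 𝔠) :
    #C(X, Y) ≤ 𝔠 := by
  obtain ⟨s, hs, hsd⟩ := TopologicalSpace.exists_countable_dense X
  have hinj : Function.Injective fun (F : C(X, Y)) (x : s) ↦ F x := fun F G hFG ↦
    DFunLike.coe_injective <| F.continuous.ext_on hsd G.continuous fun x hx ↦ congrFun hFG ⟨x, hx⟩
  calc #C(X, Y) ≤ #Y ^ #s := mk_le_of_injective hinj
    _ ≤ 𝔠 ^ #s := power_le_power_right hY
    _ ≤ 𝔠 ^ ℵ₀ := power_le_power_left continuum_ne_zero (le_aleph0_iff_set_countable.2 hs)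
    _ = 𝔠 := continuum_power_aleph0

theorem exists_mem_Icc_notMem_of_mk_lt_continuum {s : Set ℝ} (hs : #s < 𝔠) {a b : ℝ}
    (hab : a < b) : ∃ y ∈ Icc a b, y ∉ s :=
  not_subset.1 fun h ↦ (mk_le_mk_of_subset h).not_gt (by rwa [mk_Icc_real hab])

theorem mk_option_prod_nat_lt_continuum {ι : Type*} (hι : #ι < 𝔠) : #(Option ι × ℕ) < 𝔠 := by
  have hoption : #(Option ι) < 𝔠 := by
    rw [mk_option]
    exact add_lt_of_lt aleph0_le_continuum hι (one_lt_aleph0.trans aleph0_lt_continuum)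
  simpa using mul_lt_of_lt aleph0_le_continuum hoption aleph0_lt_continuum

theorem exists_forall_ne_and_mem_Icc_and_forall_ne {ι : Type} (hι : #ι < 𝔠)
    (h : Guessable (Option ι × ℕ)) (g : ℕ → ℕ) {a b : ℝ} (hab : a < b) (F : C(ℕ → ℕ, ℝ))
    (G : ι → C(ℕ → ℕ, ℝ)) (x : ι → ℕ → ℕ) {y : ι → ℝ}
    (hy : ∀ j, y j ∉ AvoidingBranch.exceptionalValues (G j)) :
    ∃ x' : ℕ → ℕ, ∃ y' ∈ Icc a b, (∀ n, x' n ≠ g n) ∧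
      y' ∉ AvoidingBranch.exceptionalValues F ∧ F x' ≠ y' ∧ ∀ j, F (x j) ≠ y' ∧ G j x' ≠ y j := by
  have hcard : #↥(AvoidingBranch.exceptionalValues F ∪ range fun j ↦ F (x j)) < 𝔠 :=
    (mk_union_le _ _).trans_lt <| add_lt_of_lt aleph0_le_continuum
      ((AvoidingBranch.countable_exceptionalValues F).le_aleph0.trans_lt aleph0_lt_continuum)
      (mk_range_le.trans_lt hι)
  obtain ⟨y', hy'I, hy'⟩ := exists_mem_Icc_notMem_of_mk_lt_continuum hcard hab
  rw [mem_union, not_or] at hy'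
  obtain ⟨x', hx'g, hx'⟩ := h.exists_forall_ne_and_forall_ne g
    (F := fun o ↦ o.elim F (G ·)) (y := fun o ↦ o.elim y' y)
    (by rintro (_ | j) <;> exact ContinuousMap.continuous _)
    (by rintro (_ | j); exacts [hy'.1, hy j])
  exact ⟨x', y', hy'I, hx'g, hy'.1, hx' none, fun j ↦ ⟨fun hj ↦ hy'.2 ⟨j, hj⟩, hx' (some j)⟩⟩

theorem exists_isEvading_forall_not_Icc_subset_image_of_guessable
    (H : ∀ ι : Type, #ι < 𝔠 → Guessable ι) :
    ∃ (ι : Type) (Φ : ι → ℕ → ℕ), IsEvading Φ ∧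
      ∀ (F : C(ℕ → ℕ, ℝ)) (a b : ℝ), a < b → ¬ Icc a b ⊆ F '' range Φ := by
  let I : Type := C(ℕ → ℕ, ℝ) × {p : ℝ × ℝ // p.1 < p.2} × (ℕ → ℕ)
  have hI : #I ≤ 𝔠 := by
    have hp : #{p : ℝ × ℝ // p.1 < p.2} ≤ 𝔠 := (mk_subtype_le _).trans (by simp [mk_real])
    calc #I = #C(ℕ → ℕ, ℝ) * (#{p : ℝ × ℝ // p.1 < p.2} * #(ℕ → ℕ)) := by simp [I]
      _ ≤ 𝔠 * (𝔠 * 𝔠) := by gcongr; exacts [mk_continuousMap_le_continuum mk_real.le, by simp]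
      _ = 𝔠 := by simp
  let V (i : I) : Type := {p : (ℕ → ℕ) × ℝ // p.2 ∈ Icc i.2.1.1.1 i.2.1.1.2 ∧
    (∀ n, p.1 n ≠ i.2.2 n) ∧ p.2 ∉ AvoidingBranch.exceptionalValues i.1}
  obtain ⟨v, hv⟩ := exists_forall_rel_of_mk_lt
    (fun (i j : I) (p : V i) (q : V j) ↦ i.1 q.1.1 ≠ p.1.2) fun s i hs v ↦ by
      obtain ⟨x, y, hyI, hxg, hy, hxy, hv⟩ := exists_forall_ne_and_mem_Icc_and_forall_ne
        (hs.trans_le hI) (H _ (mk_option_prod_nat_lt_continuum (hs.trans_le hI))) i.2.2 i.2.1.2 i.1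
        (fun j ↦ j.1.1) (fun j ↦ (v j).1.1) fun j ↦ (v j).2.2.2
      exact ⟨⟨(x, y), hyI, hxg, hy⟩, hxy, hv⟩
  refine ⟨I, fun i ↦ (v i).1.1, fun g ↦ ?_, fun F a b hab hsub ↦ ?_⟩
  · exact ⟨(0, ⟨(0, 1), zero_lt_one⟩, g), (v _).2.2.1⟩
  · let i : I := (F, ⟨(a, b), hab⟩, 0)
    obtain ⟨_, ⟨j, rfl⟩, hj⟩ := hsub (v i).2.1
    exact hv i j hj

theorem exists_isEvading_forall_not_Icc_subset_image :
    ∃ (ι : Type) (Φ : ι → ℕ → ℕ), IsEvading Φ ∧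
      ∀ (F : C(ℕ → ℕ, ℝ)) (a b : ℝ), a < b → ¬ Icc a b ⊆ F '' range Φ := by
  by_cases H : ∀ ι : Type, #ι < 𝔠 → Guessable ι
  · exact exists_isEvading_forall_not_Icc_subset_image_of_guessable H
  push Not at H
  obtain ⟨ι, hι, hguess⟩ := H
  obtain ⟨Φ, hΦ⟩ := not_guessable_iff.1 hguess
  refine ⟨ι, Φ, hΦ, fun F a b hab hsub ↦ ?_⟩
  refine (mk_le_mk_of_subset hsub).not_gt ?_
  rw [mk_Icc_real hab]
  exact (mk_image_le.trans mk_range_le).trans_lt hι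

theorem exists_continuousMap_eqOn_of_uniformContinuous {E : Type u}
    {Y : Type v} [UniformSpace E] [NormalSpace E] [UniformSpace Y] [CompleteSpace Y] [T0Space Y]
    [TietzeExtension.{u, v} Y] {S : Set E} {f : S → Y} (hf : UniformContinuous f) :
    ∃ F : C(E, Y), ∀ x : S, F x = f x := by
  have hi := (isUniformEmbedding_set_inclusion (subset_closure (s := S))).isUniformInducing
  have hd : DenseRange (inclusion (subset_closure (s := S))) :=
    (denseRange_inclusion_iff subset_closure).2 subset_rfl
  let f' : C(closure S, Y) := ⟨_, (uniformContinuous_uniformly_extend hi hd hf).continuous⟩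
  obtain ⟨F, hF⟩ := f'.exists_restrict_eq isClosed_closure
  refine ⟨F, fun x ↦ ?_⟩
  calc F x = F.restrict (closure S) (inclusion subset_closure x) := rfl
    _ = f x := by rw [hF]; exact (hi.isDenseInducing hd).extend_eq hf.continuous x

theorem not_subset_range_of_uniformContinuous {X : Type*} {E : Type u} [TopologicalSpace X]
    [UniformSpace E] [NormalSpace E] {θ : X → E} (hθ : Continuous θ) {S : Set X} {T : Set ℝ}
    (hT : ∀ F : C(X, ℝ), ¬ T ⊆ F '' S) {f : θ '' S → ℝ} (hf : UniformContinuous f) :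
    ¬ T ⊆ range f := by
  obtain ⟨F, hF⟩ := exists_continuousMap_eqOn_of_uniformContinuous hf
  refine fun h ↦ hT (F.comp ⟨θ, hθ⟩) (h.trans ?_)
  rintro _ ⟨⟨_, x, hx, rfl⟩, rfl⟩
  exact ⟨x, hx, hF ⟨θ x, mem_image_of_mem θ hx⟩⟩

theorem exists_le_inv_two_pow_and_rpow_le {s : ℝ} (hs : 0 < s) {d δ : ℝ≥0∞} (hd : d ≤ 2⁻¹)
    (hδ : δ ≠ 0) : ∃ k : ℕ, d ≤ 2⁻¹ ^ (k + 1) ∧ (2⁻¹ ^ (k + 1)) ^ s ≤ (2 * d) ^ s + δ := by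
  classical
  have hex : ∃ k : ℕ, ((2⁻¹ : ℝ≥0∞) ^ (k + 1)) ^ s ≤ (2 * d) ^ s + δ := by
    have hδs : δ ^ s⁻¹ ≠ 0 := by simp [ENNReal.rpow_eq_zero_iff, hδ, hs, hs.le]
    obtain ⟨k, hk⟩ := ENNReal.exists_inv_two_pow_lt hδs
    have hk' : (2⁻¹ : ℝ≥0∞) ^ (k + 1) ≤ δ ^ s⁻¹ :=
      (pow_le_pow_of_le_one zero_le (by simp) k.le_succ).trans hk.le
    exact ⟨k, ((ENNReal.le_rpow_inv_iff hs).1 hk').trans le_add_self⟩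
  refine ⟨Nat.find hex, ?_, Nat.find_spec hex⟩
  rcases hk : Nat.find hex with _ | k
  · simpa using hd
  · have hlt : (2 * d) ^ s < (2⁻¹ ^ (k + 1)) ^ s :=
      le_self_add.trans_lt (not_le.1 (Nat.find_min hex (by omega)))
    have h2d : 2 * d ≤ 2⁻¹ ^ (k + 1) := ((ENNReal.rpow_lt_rpow_iff hs).1 hlt).le
    calc d = 2⁻¹ * (2 * d) := by
          rw [← mul_assoc, ENNReal.inv_mul_cancel two_ne_zero ENNReal.ofNat_ne_top, one_mul]
      _ ≤ 2⁻¹ ^ (k + 1 + 1) := by rw [pow_succ' _ (k + 1)]; gcongr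

theorem exists_cover_ediam_le_inv_two_pow {X : Type*} [EMetricSpace X] [MeasurableSpace X]
    [BorelSpace X] {s : ℝ} (hs : 0 < s) {A : Set X} (hA : μH[s] A = 0) {η : ℝ≥0∞} (hη : η ≠ 0) :
    ∃ (t : ℕ → Set X) (k : ℕ → ℕ), A ⊆ ⋃ n, t n ∧ (∀ n, ediam (t n) ≤ 2⁻¹ ^ (k n + 1)) ∧
      ∑' n, ((2⁻¹ : ℝ≥0∞) ^ (k n + 1)) ^ s ≤ η := by
  have hη2 : η / 2 ≠ 0 := by simp [hη]
  obtain ⟨δ, hδ, hδη⟩ := ENNReal.exists_pos_sum_of_countable' hη2 ℕ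
  have h2s : (2 : ℝ≥0∞) ^ s ≠ ⊤ := by simp
  have hlt : (⨅ (t : ℕ → Set X) (_ : A ⊆ ⋃ n, t n) (_ : ∀ n, ediam (t n) ≤ 2⁻¹),
      ∑' n, ⨆ _ : (t n).Nonempty, ediam (t n) ^ s) < η / 2 / 2 ^ s := by
    rw [hausdorffMeasure_apply, ENNReal.iSup_eq_zero] at hA
    rw [ENNReal.iSup_eq_zero.1 (hA 2⁻¹) (by simp)]
    exact ENNReal.div_pos hη2 h2s
  simp only [iInf_lt_iff] at hlt
  obtain ⟨t, hAt, htd, htη⟩ := hlt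
  have hnonempty n : ediam (t n) ^ s ≤ ⨆ _ : (t n).Nonempty, ediam (t n) ^ s := by
    rcases (t n).eq_empty_or_nonempty with ht | ht <;> simp [ht, hs]
  choose k hdk hk using fun n ↦ exists_le_inv_two_pow_and_rpow_le hs (htd n) (hδ n).ne'
  refine ⟨t, k, hAt, hdk, ?_⟩
  calc ∑' n, ((2⁻¹ : ℝ≥0∞) ^ (k n + 1)) ^ s
      ≤ ∑' n, (2 ^ s * ediam (t n) ^ s + δ n) := by
        gcongr with n
        rw [← ENNReal.mul_rpow_of_nonneg _ _ hs.le]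
        exact hk n
    _ = 2 ^ s * ∑' n, ediam (t n) ^ s + ∑' n, δ n := by
        rw [ENNReal.tsum_add, ENNReal.tsum_mul_left]
    _ ≤ 2 ^ s * (η / 2 / 2 ^ s) + η / 2 := by
        gcongr
        exact (ENNReal.tsum_le_tsum hnonempty).trans htη.le
    _ ≤ η / 2 + η / 2 := by gcongr; exact ENNReal.mul_div_le
    _ = η := ENNReal.add_halves η

theorem exists_embedding_sigma_fin_of_encard_le {ι κ : Type*} {k : ι → κ} {b : κ → ℕ}
    (hb : ∀ c, {i | k i = c}.encard ≤ b c) :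
    ∃ e : ι ↪ Σ c, Fin (b c), ∀ i, (e i).1 = k i := by
  have (c : κ) : Nonempty ({i | k i = c} ↪ Fin (b c)) := by
    obtain ⟨hfinite, hcard⟩ := encard_le_coe_iff_finite_ncard_le.1 (hb c)
    have := hfinite.fintype
    exact Function.Embedding.nonempty_of_card_le (by simpa using hcard)
  let f c := Classical.choice (this c)
  exact ⟨(Equiv.sigmaFiberEquiv k).symm.toEmbedding.trans (.sigmaMap (.refl κ) f), fun _ ↦ rfl⟩

theorem exists_embedding_sigma_fin_of_tsum_le {ι κ : Type*} {k : ι → κ} {b : κ → ℕ}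
    {w : κ → ℝ≥0∞} (hw : ∀ c, w c ≠ 0) (hw' : ∀ c, w c ≠ ⊤)
    (hb : ∀ c, ∑' i, w (k i) ≤ b c * w c) : ∃ e : ι ↪ Σ c, Fin (b c), ∀ i, (e i).1 = k i := by
  refine exists_embedding_sigma_fin_of_encard_le fun c ↦ ?_
  have h : ({i | k i = c}.encard : ℝ≥0∞) * w c ≤ b c * w c := calc
    _ = ∑' _ : {i | k i = c}, w c := (ENNReal.tsum_set_const _ _).symm
    _ = ∑' i : {i | k i = c}, w (k i) := tsum_congr fun i ↦ by rw [i.2]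
    _ ≤ ∑' i, w (k i) := ENNReal.tsum_comp_le_tsum_of_injective Subtype.val_injective _
    _ ≤ b c * w c := hb c
  exact_mod_cast (ENNReal.mul_le_mul_iff_left (hw c) (hw' c)).1 h

/-- Sequences of blocks of natural numbers, the `k`-th block having length `b k`, with the metric
`2 ^ -k` for `k` the first block at which two points differ. A whole block counts as one
coordinate, so the lengths `b k` do not affect distances. -/
def BlockSpace (b : ℕ → ℕ) : Type := ∀ k, Fin (b k) → ℕ

namespace BlockSpace

variable {b : ℕ → ℕ}

noncomputable instance : MetricSpace (BlockSpace b) :=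
  PiNat.metricSpace (E := fun k ↦ Fin (b k) → ℕ)

instance : SecondCountableTopology (BlockSpace b) :=
  inferInstanceAs (SecondCountableTopology (∀ k, Fin (b k) → ℕ))

/-- The regrouping into blocks of a family of entries, indexed by block and position. -/
def ofEntries (x : (Σ k, Fin (b k)) → ℕ) : BlockSpace b := fun k j ↦ x ⟨k, j⟩

theorem continuous_ofEntries : Continuous (ofEntries (b := b)) :=
  continuous_pi (A := fun k ↦ Fin (b k) → ℕ) fun _ ↦ continuous_pi fun _ ↦ continuous_apply _

theorem apply_eq_of_ediam_le {t : Set (BlockSpace b)} {k : ℕ} (ht : ediam t ≤ 2⁻¹ ^ (k + 1))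
    {x y : BlockSpace b} (hx : x ∈ t) (hy : y ∈ t) : x k = y k := by
  have hd : dist x y ≤ (1 / 2) ^ (k + 1) := by
    rw [← edist_le_ofReal (by positivity), ENNReal.ofReal_pow (by positivity)]
    simpa [ENNReal.ofReal_inv_of_pos] using (edist_le_ediam_of_mem hx hy).trans ht
  exact PiNat.mem_cylinder_iff_dist_le.2 hd k k.lt_succ_self

theorem hausdorffMeasure_range_ne_zero [MeasurableSpace (BlockSpace b)] [BorelSpace (BlockSpace b)]
    {s : ℝ} (hs : 0 < s) {η : ℝ≥0∞} (hη : η ≠ 0) (hb : ∀ k, η ≤ b k * (2⁻¹ ^ (k + 1)) ^ s)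
    {ι : Type*} {Φ : ι → (Σ k, Fin (b k)) → ℕ} (hΦ : IsEvading Φ) :
    μH[s] (range (ofEntries ∘ Φ)) ≠ 0 := by
  intro h0
  obtain ⟨t, k, ht, htk, hsum⟩ := exists_cover_ediam_le_inv_two_pow hs h0 hη
  obtain ⟨e, he⟩ := exists_embedding_sigma_fin_of_tsum_le
    (w := fun c ↦ ((2⁻¹ : ℝ≥0∞) ^ (c + 1)) ^ s) (by simp) (by simp)
    fun c ↦ hsum.trans (hb c)
  have (n : ℕ) : ∃ v : BlockSpace b, ∀ x ∈ t n, x (k n) = v (k n) := by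
    rcases (t n).eq_empty_or_nonempty with hn | ⟨v, hv⟩
    · exact ⟨fun _ _ ↦ 0, by simp [hn]⟩
    · exact ⟨v, fun x hx ↦ apply_eq_of_ediam_le (htk n) hx hv⟩
  choose v hv using this
  obtain ⟨i, hi⟩ := hΦ.comp_injective e.injective fun n ↦ v n (e n).1 (e n).2
  obtain ⟨n, hn⟩ := mem_iUnion.1 (ht ⟨i, rfl⟩)
  have hin : ofEntries (Φ i) (e n).1 = v n (e n).1 := by rw [he n]; exact hv n _ hn
  exact hi n (congrFun hin (e n).2)

theorem dimH_range_eq_top {ι : Type*} {Φ : ι → (Σ k, Fin (b k)) → ℕ} (hΦ : IsEvading Φ)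
    (hb : ∀ R : ℕ, ∃ η ≠ 0, ∀ k, η ≤ (b k * (2⁻¹ ^ (k + 1)) ^ R : ℝ≥0∞)) :
    dimH (range (ofEntries ∘ Φ)) = ⊤ := by
  borelize (BlockSpace b)
  refine ENNReal.eq_top_of_forall_nnreal_le fun s ↦ ?_
  obtain ⟨R, hR⟩ := exists_nat_gt s
  have hR0 : (0 : ℝ) < R := s.2.trans_lt hR
  obtain ⟨η, hη, hηb⟩ := hb R
  have h := hausdorffMeasure_range_ne_zero hR0 hη
    (fun k ↦ (hηb k).trans_eq (by rw [ENNReal.rpow_natCast])) hΦ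
  calc (s : ℝ≥0∞) ≤ (R : NNReal) := by exact_mod_cast hR.le
    _ ≤ _ := le_dimH_of_hausdorffMeasure_ne_zero (by simpa using h)

end BlockSpace

theorem inv_two_pow_le_two_pow_mul_inv_two_pow (R k : ℕ) :
    (2⁻¹ : ℝ≥0∞) ^ (R * R) ≤ 2 ^ (k * k) * (2⁻¹ ^ k) ^ R := by
  have hexp : k * R ≤ R * R + k * k := by nlinarith [sq_nonneg ((k : ℤ) - R)]
  calc (2⁻¹ : ℝ≥0∞) ^ (R * R)
      = 2 ^ (k * k) * 2⁻¹ ^ (R * R + k * k) := by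
        rw [pow_add, mul_left_comm, ← mul_pow,
          ENNReal.mul_inv_cancel two_ne_zero ENNReal.ofNat_ne_top, one_pow, mul_one]
    _ ≤ 2 ^ (k * k) * (2⁻¹ ^ k) ^ R := by
        rw [← pow_mul]
        gcongr _ * ?_
        exact pow_le_pow_of_le_one zero_le (by simp) hexp

theorem exists_separable_large_dimH_no_uniformlyContinuous_onto_interval_general :
    ∃ (X : Type) (_ : MetricSpace X),
      TopologicalSpace.SeparableSpace X ∧
      dimH (univ : Set X) = ⊤ ∧
      ∀ f : X → ℝ, UniformContinuous f → ∀ a b : ℝ, a < b → ¬ Icc a b ⊆ range f := by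
  obtain ⟨ι, Φ, hΦ, hIcc⟩ := exists_isEvading_forall_not_Icc_subset_image
  let b (k : ℕ) : ℕ := 2 ^ ((k + 1) * (k + 1))
  let θ (x : ℕ → ℕ) : BlockSpace b := .ofEntries (x ∘ Encodable.encode)
  have hθ : Continuous θ :=
    BlockSpace.continuous_ofEntries.comp (continuous_pi fun _ ↦ continuous_apply _)
  have hdim : dimH (θ '' range Φ) = ⊤ := by
    rw [← range_comp]
    refine BlockSpace.dimH_range_eq_top (hΦ.comp_injective Encodable.encode_injective) fun R ↦
      ⟨2⁻¹ ^ (R * R), by simp, fun k ↦ ?_⟩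
    simpa [b] using inv_two_pow_le_two_pow_mul_inv_two_pow R (k + 1)
  refine ⟨θ '' range Φ, inferInstance, inferInstance, ?_, fun f hf a b hab ↦
    not_subset_range_of_uniformContinuous hθ (fun F ↦ hIcc F a b hab) hf⟩
  rw [← (isometry_subtype_coe (s := θ '' range Φ)).dimH_image, image_univ, Subtype.range_coe, hdim]

/-- For every real number `r` there exists a separable metric space `X` with
Hausdorff dimension at least `r` such that no uniformly continuous function `f : X → ℝ` has
image equal to a non-degenerate closed interval `[a,b]` (`a < b`). -/
theorem exists_separable_large_dimH_no_uniformlyContinuous_onto_interval (r : ℝ) :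
    ∃ (X : Type) (_ : MetricSpace X),
      TopologicalSpace.SeparableSpace X ∧
      ENNReal.ofReal r ≤ dimH (Set.univ : Set X) ∧
      ∀ f : X → ℝ, UniformContinuous f →
        ∀ a b : ℝ, a < b → Set.range f ≠ Set.Icc a b := by
  obtain ⟨X, _, hX, hdim, hf⟩ :=
    exists_separable_large_dimH_no_uniformlyContinuous_onto_interval_general
  exact ⟨X, _, hX, hdim ▸ le_top, fun f hfc a b hab h ↦ hf f hfc a b hab h.ge⟩
end

section
/- Fix a positive integer n and assume hypothesis (⋆): for every index set I of cardinality less than 𝔠, every family (F_i)_{i∈I} of closed Lebesgue-null subsets of ℝ^n, and every Lebesgue-null set N ⊆ ℝ^n, the union N ∪ ⋃_{i∈I} F_i is not all of ℝ^n. Then there exists a set A ⊆ ℝ^n of positive Lebesgue outer measure (hence of Hausdorff dimension n) such that for every subset B ⊆ A, every function f : ℝ^n → ℝ uniformly continuous on B, and every a < b, f(B) ≠ [a,b]. -/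
open MeasureTheory
open scoped ENNReal

/-! Let `f` be uniformly continuous on `B`. The closure `K` of its graph over `B` is still the graph
of a function, so the fibres `{x | (x, y) ∈ K}` are closed and pairwise disjoint: only countably
many of them have positive measure, and fewer than `𝔠` points meet fewer than `𝔠` of them. Hence
every set of `𝔠` values contains some `y` whose fibre is null and misses fewer than `𝔠` prescribed
points. A space with a countable basis has at most `𝔠` Borel sets, so a transfinite recursion of
length at most `𝔠` can interleave two tasks: for each Borel null set `N`, choose a point outside `N`
and outside all null fibres chosen so far, which is possible by (⋆); for each pair of a closed `K`
as above and an uncountable Borel set `C` of values, choose a null fibre over `C` that misses all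
points chosen so far. The set `A` of chosen points lies in no null set and misses all chosen
fibres, so no uniformly continuous image of a subset of `A` contains an uncountable Borel set. -/

open Cardinal hiding univ
open Set

universe u

section TransfiniteRecursion

theorem exists_forall_of_wellFounded {ι : Type*} {V : ι → Type*} {lt : ι → ι → Prop}
    (hlt : WellFounded lt) {P : ∀ i, (∀ j, lt j i → V j) → V i → Prop}
    (h : ∀ i g, ∃ v, P i g v) : ∃ v : ∀ i, V i, ∀ i, P i (fun j _ => v j) (v i) := by
  choose c hc using h
  refine ⟨hlt.fix c, fun i => ?_⟩
  rw [hlt.fix_eq]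
  exact hc i _

theorem exists_forall_forall_rel_of_mk_lt {κ : Cardinal.{u}} {α β I J : Type u}
    (hIJ : #I + #J ≤ κ) {r : α → β → Prop} {P : I → Set α} {Q : J → Set β}
    (hP : ∀ i, ∀ T : Set β, #T < κ → ∃ a ∈ P i, ∀ b ∈ T, r a b)
    (hQ : ∀ j, ∀ S : Set α, #S < κ → ∃ b ∈ Q j, ∀ a ∈ S, r a b) :
    ∃ (a : I → α) (b : J → β), (∀ i, a i ∈ P i) ∧ (∀ j, b j ∈ Q j) ∧ ∀ i j, r (a i) (b j) := by
  -- In a well-order of minimal type every element has fewer than `κ` predecessors, so `hP` and `hQ`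
  -- apply to the set of choices made before any given step.
  obtain ⟨lt, _, hord⟩ := exists_ord_eq (I ⊕ J)
  have mk_earlier_lt (t : I ⊕ J) : #{s // lt s t} < κ :=
    (card_typein_lt t hord).trans_le (by rwa [add_def] at hIJ)
  have mk_range_earlier_lt {γ ι : Type u} {e : ι → I ⊕ J} (he : e.Injective) (t : I ⊕ J)
      (g : {s // lt (e s) t} → γ) : #(range g) < κ :=
    (mk_range_le.trans (mk_preimage_of_injective e {s | lt s t} he)).trans_lt (mk_earlier_lt t)
  let V : I ⊕ J → Type u := Sum.elim (fun _ => α) (fun _ => β)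
  let Compatible : ∀ t, (∀ s, lt s t → V s) → V t → Prop
    | .inl i, g, a => a ∈ P i ∧ ∀ j (h : lt (.inr j) (.inl i)), r a (g (.inr j) h)
    | .inr j, g, b => b ∈ Q j ∧ ∀ i (h : lt (.inl i) (.inr j)), r (g (.inl i) h) b
  have exists_compatible : ∀ t g, ∃ v, Compatible t g v := by
    rintro (i | j) g
    · obtain ⟨a, ha, har⟩ := hP i _
        (mk_range_earlier_lt Sum.inr_injective (.inl i) fun s => g (.inr s.1) s.2)
      exact ⟨a, ha, fun j h => har _ ⟨⟨j, h⟩, rfl⟩⟩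
    · obtain ⟨b, hb, hbr⟩ := hQ j _
        (mk_range_earlier_lt Sum.inl_injective (.inr j) fun s => g (.inl s.1) s.2)
      exact ⟨b, hb, fun i h => hbr _ ⟨⟨i, h⟩, rfl⟩⟩
  obtain ⟨v, hv⟩ := exists_forall_of_wellFounded IsWellFounded.wf exists_compatible
  refine ⟨fun i => v (.inl i), fun j => v (.inr j), fun i => (hv (.inl i)).1,
    fun j => (hv (.inr j)).1, fun i j => ?_⟩
  rcases trichotomous_of lt (.inl i) (.inr j) with h | h | h
  · exact (hv (.inr j)).2 i h
  · exact absurd h Sum.inl_ne_inr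
  · exact (hv (.inl i)).2 j h

end TransfiniteRecursion

section Cardinality

theorem mk_subtype_le_continuum_of_measurableSet {X : Type*} [MeasurableSpace X]
    [hX : MeasurableSpace.CountablyGenerated X] {p : Set X → Prop}
    (hp : ∀ s, p s → MeasurableSet s) : #{s // p s} ≤ 𝔠 := by
  obtain ⟨b, hb, rfl⟩ := hX.isCountablyGenerated
  exact (mk_subtype_mono hp).trans <| MeasurableSpace.cardinal_measurableSet_le_continuum <|
    hb.le_aleph0.trans aleph0_le_continuum

theorem mk_eq_continuum_of_measurableSet_of_not_countable {Y : Type*} [MeasurableSpace Y]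
    [StandardBorelSpace Y] {C : Set Y} (hC : MeasurableSet C) (hCunc : ¬ C.Countable) :
    #C = 𝔠 := by
  have := hC.standardBorel
  have e : C ≃ᵐ (ℕ → Bool) := PolishSpace.measurableEquivNatBoolOfNotCountable hCunc
  simpa using lift_mk_eq'.2 ⟨e.toEquiv⟩

end Cardinality

theorem dimH_eq_finrank_of_addHaar_ne_zero {E : Type*} [NormedAddCommGroup E] [NormedSpace ℝ E]
    [FiniteDimensional ℝ E] [MeasurableSpace E] [BorelSpace E] (μ : Measure E)
    [μ.IsAddHaarMeasure] {A : Set E} (hA : μ A ≠ 0) : dimH A = Module.finrank ℝ E := by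
  apply le_antisymm
  · exact (dimH_mono (subset_univ A)).trans_eq (Real.dimH_univ_eq_finrank E)
  · have hμ : μ ≪ Measure.hausdorffMeasure (Module.finrank ℝ E) :=
      Measure.absolutelyContinuous_isAddHaarMeasure _ _
    have hdim : Measure.hausdorffMeasure ((Module.finrank ℝ E : NNReal) : ℝ) A ≠ 0 := by
      simpa using fun h => hA (hμ h)
    simpa using le_dimH_of_hausdorffMeasure_ne_zero hdim

section FunctionalRelations

theorem injOn_fst_closure_graphOn {E Y : Type*} [UniformSpace E] [UniformSpace Y] [T0Space Y]
    {f : E → Y} {B : Set E} (hf : UniformContinuousOn f B) :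
    (closure (B.graphOn f)).InjOn Prod.fst := by
  rintro ⟨x, y⟩ hy ⟨_, y'⟩ hy' rfl
  refine Prod.ext rfl (eq_of_uniformity fun {V} hV => ?_)
  obtain ⟨W, hW, _, hWV⟩ := comp_comp_symm_mem_uniformity_sets hV
  obtain ⟨U, hU, _, hUf⟩ := comp_symm_mem_uniformity_sets (Filter.mem_inf_principal.1 (hf hW))
  have exists_near {z : Y} (hz : (x, z) ∈ closure (B.graphOn f)) :
      ∃ u ∈ B, (x, u) ∈ U ∧ (z, f u) ∈ W := by
    obtain ⟨_, ⟨hxu, hzu⟩, u, hu, rfl⟩ := mem_closure_iff_nhds.1 hz _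
      (prod_mem_nhds (UniformSpace.ball_mem_nhds x hU) (UniformSpace.ball_mem_nhds z hW))
    exact ⟨u, hu, hxu, hzu⟩
  obtain ⟨u, hu, hxu, hyu⟩ := exists_near hy
  obtain ⟨v, hv, hxv, hyv⟩ := exists_near hy'
  have huv : (f u, f v) ∈ W := @hUf (u, v) ⟨x, SetRel.symm U hxu, hxv⟩ ⟨hu, hv⟩
  exact hWV ⟨f v, ⟨f u, hyu, huv⟩, SetRel.symm W hyv⟩

theorem countable_setOf_measure_fiber_pos {E Y : Type*} [MeasurableSpace E] [MeasurableSpace Y]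
    {K : Set (E × Y)} (hK : MeasurableSet K) (hKfst : K.InjOn Prod.fst) (μ : Measure E)
    [SFinite μ] : {y | 0 < μ {x | (x, y) ∈ K}}.Countable :=
  Measure.countable_meas_pos_of_disjoint_iUnion (fun _ => measurable_prodMk_right hK)
    fun _ _ hne => disjoint_left.2 fun _ hx hx' => hne (congrArg Prod.snd (hKfst hx hx' rfl))

variable {E Y : Type u} {K : Set (E × Y)}

theorem mk_setOf_exists_mem_fiber_le (hK : K.InjOn Prod.fst) (S : Set E) :
    #{y | ∃ x ∈ S, (x, y) ∈ K} ≤ #S :=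
  calc #{y | ∃ x ∈ S, (x, y) ∈ K} = #(Prod.snd '' (K ∩ Prod.fst ⁻¹' S)) := by
        congr! 2; ext y; simp [and_comm]
    _ ≤ #(K ∩ Prod.fst ⁻¹' S : Set (E × Y)) := mk_image_le
    _ = #(Prod.fst '' (K ∩ Prod.fst ⁻¹' S)) :=
        (mk_image_eq_of_injOn _ _ (hK.mono inter_subset_left)).symm
    _ ≤ #S := mk_le_mk_of_subset (by grind)

theorem exists_measure_fiber_eq_zero_forall_notMem [MeasurableSpace E] [MeasurableSpace Y]
    (hK : MeasurableSet K) (hKfst : K.InjOn Prod.fst) (μ : Measure E) [SFinite μ]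
    {S : Set E} {C : Set Y} (hC : ℵ₀ < #C) (hSC : #S < #C) :
    ∃ y ∈ C, μ {x | (x, y) ∈ K} = 0 ∧ ∀ x ∈ S, (x, y) ∉ K := by
  by_contra! hcon
  have hsub : C ⊆ {y | 0 < μ {x | (x, y) ∈ K}} ∪ {y | ∃ x ∈ S, (x, y) ∈ K} := fun y hy =>
    (eq_zero_or_pos (a := μ {x | (x, y) ∈ K})).symm.imp_right (hcon y hy)
  have hpos : #{y | 0 < μ {x | (x, y) ∈ K}} < #C :=
    (countable_setOf_measure_fiber_pos hK hKfst μ).le_aleph0.trans_lt hC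
  have hmeet : #{y | ∃ x ∈ S, (x, y) ∈ K} < #C :=
    (mk_setOf_exists_mem_fiber_le hKfst S).trans_lt hSC
  exact ((mk_le_mk_of_subset hsub).trans (mk_union_le _ _)).not_gt
    (add_lt_of_lt hC.le hpos hmeet)

end FunctionalRelations

/-- Hypothesis (⋆) for a measure `μ` in place of Lebesgue measure on `ℝ^n`: the whole space is not
the union of one `μ`-null set and fewer than `𝔠` closed `μ`-null sets. Index sets are taken in the
universe of the space, which loses nothing because only their cardinality matters. -/
def StarHypothesis {E : Type u} [TopologicalSpace E] [MeasurableSpace E] (μ : Measure E) : Prop :=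
  ∀ (I : Type u) (F : I → Set E) (N : Set E), #I < 𝔠 → (∀ i, IsClosed (F i) ∧ μ (F i) = 0) →
    μ N = 0 → N ∪ ⋃ i, F i ≠ univ

namespace StarHypothesis

variable {E Y : Type u} [MeasurableSpace E] [MeasurableSpace Y] {μ : Measure E}

theorem exists_notMem [TopologicalSpace E] (hμ : StarHypothesis μ) {N : Set E} (hN : μ N = 0)
    {T : Set {F : Set E // IsClosed F ∧ μ F = 0}} (hT : #T < 𝔠) :
    ∃ x ∉ N, ∀ F ∈ T, x ∉ F.1 := by
  have hne := hμ T (fun F => F.1.1) N hT (fun F => F.1.2) hN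
  simpa [ne_univ_iff_exists_notMem] using hne

theorem exists_measure_pos_forall_exists_disjoint_fiber [TopologicalSpace E]
    [SecondCountableTopology E] [BorelSpace E] [TopologicalSpace Y] [PolishSpace Y] [BorelSpace Y]
    [SFinite μ] (hμ : StarHypothesis μ) :
    ∃ A : Set E, 0 < μ A ∧ ∀ K : Set (E × Y), IsClosed K → K.InjOn Prod.fst →
      ∀ C : Set Y, MeasurableSet C → ¬ C.Countable → ∃ y ∈ C, Disjoint A {x | (x, y) ∈ K} := by
  let I := {N : Set E // MeasurableSet N ∧ μ N = 0}
  let J := {K : Set (E × Y) // IsClosed K ∧ K.InjOn Prod.fst} ×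
    {C : Set Y // MeasurableSet C ∧ ¬ C.Countable}
  have hI : #I ≤ 𝔠 := mk_subtype_le_continuum_of_measurableSet fun _ h => h.1
  have hJ : #J ≤ 𝔠 := by
    rw [mk_prod, lift_id, lift_id, ← continuum_mul_self]
    exact mul_le_mul' (mk_subtype_le_continuum_of_measurableSet fun _ h => h.1.measurableSet)
      (mk_subtype_le_continuum_of_measurableSet fun _ h => h.1)
  have exists_fiber (j : J) (S : Set E) (hS : #S < 𝔠) :
      ∃ F : {F : Set E // IsClosed F ∧ μ F = 0},
        (∃ y ∈ j.2.1, F.1 = {x | (x, y) ∈ j.1.1}) ∧ ∀ x ∈ S, x ∉ F.1 := by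
    obtain ⟨⟨K, hK, hKfst⟩, C, hC, hCunc⟩ := j
    have hCcard : #C = 𝔠 := mk_eq_continuum_of_measurableSet_of_not_countable hC hCunc
    obtain ⟨y, hy, hnull, havoid⟩ := exists_measure_fiber_eq_zero_forall_notMem hK.measurableSet
      hKfst μ (hCcard ▸ aleph0_lt_continuum) (hCcard ▸ hS)
    exact ⟨⟨_, hK.preimage (Continuous.prodMk_left y), hnull⟩, ⟨y, hy, rfl⟩, havoid⟩
  obtain ⟨a, F, ha, hF, haF⟩ := exists_forall_forall_rel_of_mk_lt
    ((add_le_add hI hJ).trans_eq continuum_add_self) (P := fun N : I => N.1ᶜ)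
    (fun N _ hT => hμ.exists_notMem N.2.2 hT) exists_fiber
  refine ⟨range a, pos_iff_ne_zero.2 fun hnull => ?_, fun K hK hKfst C hC hCunc => ?_⟩
  · let N : I := ⟨toMeasurable μ (range a), measurableSet_toMeasurable _ _,
      (measure_toMeasurable _).trans hnull⟩
    exact ha N (subset_toMeasurable μ _ (mem_range_self N))
  · let j : J := ⟨⟨K, hK, hKfst⟩, C, hC, hCunc⟩
    obtain ⟨y, hy, hFy⟩ := hF j
    exact ⟨y, hy, disjoint_left.2 <| forall_mem_range.2 fun N hx => haF N j (hFy.ge hx)⟩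

theorem exists_measure_pos_forall_uniformContinuousOn_countable [UniformSpace E]
    [SecondCountableTopology E] [BorelSpace E] [UniformSpace Y] [PolishSpace Y] [BorelSpace Y]
    [SFinite μ] (hμ : StarHypothesis μ) :
    ∃ A : Set E, 0 < μ A ∧ ∀ B ⊆ A, ∀ f : E → Y, UniformContinuousOn f B →
      ∀ C ⊆ f '' B, MeasurableSet C → C.Countable := by
  obtain ⟨A, hpos, hA⟩ := hμ.exists_measure_pos_forall_exists_disjoint_fiber (Y := Y)
  refine ⟨A, hpos, fun B hB f hf C hCB hC => by_contra fun hCunc => ?_⟩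
  obtain ⟨y, hy, hdisj⟩ := hA _ isClosed_closure (injOn_fst_closure_graphOn hf) C hC hCunc
  obtain ⟨x, hx, rfl⟩ := hCB hy
  exact disjoint_left.1 hdisj (hB hx) (subset_closure (mem_image_of_mem _ hx))

end StarHypothesis

theorem star_imp_exists_nonNull_set_no_subset_uniformlyContinuousOn_onto_interval_general
    {E Y : Type u} [NormedAddCommGroup E] [NormedSpace ℝ E] [FiniteDimensional ℝ E]
    [MeasurableSpace E] [BorelSpace E] [UniformSpace Y] [PolishSpace Y] [MeasurableSpace Y]
    [BorelSpace Y] (μ : Measure E) [μ.IsAddHaarMeasure] (hstar : StarHypothesis μ) :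
    ∃ A : Set E, 0 < μ A ∧ dimH A = Module.finrank ℝ E ∧
      ∀ B ⊆ A, ∀ f : E → Y, UniformContinuousOn f B →
        ∀ C ⊆ f '' B, MeasurableSet C → C.Countable := by
  obtain ⟨A, hpos, hA⟩ :=
    hstar.exists_measure_pos_forall_uniformContinuousOn_countable (Y := Y)
  exact ⟨A, hpos, dimH_eq_finrank_of_addHaar_ne_zero μ hpos.ne', hA⟩

/-- Fix a positive integer `n` and assume hypothesis (⋆): fewer than continuum
many closed Lebesgue-null subsets of `ℝ^n` together with one Lebesgue-null set cannot cover
`ℝ^n`. Then there exists a set `A ⊆ ℝ^n` of positive Lebesgue outer measure (hence of Hausdorff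
dimension `n`) such that for every subset `B ⊆ A`, every function `f : ℝ^n → ℝ` uniformly
continuous on `B`, and every `a < b`, `f(B) ≠ [a,b]`. -/
theorem star_imp_exists_nonNull_set_no_subset_uniformlyContinuousOn_onto_interval
    (n : ℕ) (hn : 0 < n)
    (hstar : ∀ (I : Type) (F : I → Set (EuclideanSpace ℝ (Fin n)))
        (N : Set (EuclideanSpace ℝ (Fin n))),
      Cardinal.mk I < Cardinal.continuum →
      (∀ i, IsClosed (F i) ∧ volume (F i) = 0) →
      volume N = 0 →
      N ∪ ⋃ i, F i ≠ Set.univ) :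
    ∃ A : Set (EuclideanSpace ℝ (Fin n)),
      0 < volume A ∧
      dimH A = n ∧
      ∀ B ⊆ A, ∀ f : EuclideanSpace ℝ (Fin n) → ℝ, UniformContinuousOn f B →
        ∀ a b : ℝ, a < b → f '' B ≠ Set.Icc a b := by
  obtain ⟨A, hpos, hdim, hA⟩ :=
    star_imp_exists_nonNull_set_no_subset_uniformlyContinuousOn_onto_interval_general
      (Y := ℝ) volume hstar
  refine ⟨A, hpos, by simpa using hdim, fun B hB f hf a b hab hfB => ?_⟩
  have hcount : (Icc a b).Countable := hA B hB f hf _ hfB.ge measurableSet_Icc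
  exact aleph0_lt_continuum.not_ge (mk_Icc_real hab ▸ hcount.le_aleph0)
end

section
/- Assume that ℝ cannot be covered by fewer than continuum many meager sets (i.e., for every index set I of cardinality less than 𝔠 and every family (M_i)_{i∈I} of meager subsets of ℝ, ⋃_{i∈I} M_i ≠ ℝ). Then for every positive integer n hypothesis (⋆) holds: for every index set I of cardinality less than 𝔠, every family (F_i)_{i∈I} of closed Lebesgue-null subsets of ℝ^n, and every Lebesgue-null set N ⊆ ℝ^n, the union N ∪ ⋃_{i∈I} F_i is not all of ℝ^n. -/
open MeasureTheory
open scoped ENNReal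

/-!
A measurable injection of a Polish space into `ℝ` is continuous on some compact set `K` that has
positive measure and misses the given null set. Push the measure conditioned on `K` forward to `ℝ`.
If the measure has no atoms, composing the injection with the distribution function of the
push-forward gives a map that is continuous on `K`, maps `K` onto a set containing `(0, 1)`, and
sends null sets to null sets. It therefore turns closed null sets, intersected with `K`, into
compact null subsets of `ℝ`, which are meagre; and covering `(0, 1)` by meagre sets is no easier
than covering `ℝ`.
-/

open Set ProbabilityTheory

theorem not_subset_iUnion_of_isMeagre {I E : Type*} [NormedAddCommGroup E] [InnerProductSpace ℝ E]
    (hcov : ∀ M : I → Set E, (∀ i, IsMeagre (M i)) → ⋃ i, M i ≠ univ)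
    {U : Set E} (hU : IsOpen U) (hne : U.Nonempty)
    {M : I → Set E} (hM : ∀ i, IsMeagre (M i)) : ¬ U ⊆ ⋃ i, M i := by
  intro hUM
  obtain ⟨c, hc⟩ := hne
  obtain ⟨r, hr, hball⟩ := Metric.isOpen_iff.1 hU c hc
  let φ := OpenPartialHomeomorph.univBall c r
  have hsource : φ.source = univ := OpenPartialHomeomorph.univBall_source c r
  have hφ : Topology.IsOpenEmbedding φ := φ.isOpenEmbedding hsource
  have hmem (x : E) : φ x ∈ U := by
    apply hball
    rw [← OpenPartialHomeomorph.univBall_target c hr]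
    exact φ.map_source (hsource ▸ mem_univ x)
  refine hcov (fun i => φ ⁻¹' M i)
    (fun i => (hM i).preimage_of_isOpenMap hφ.continuous hφ.isOpenMap) ?_
  rw [← preimage_iUnion]
  exact eq_univ_of_forall fun x => hUM (hmem x)

theorem exists_isCompact_subset_continuousOn {X Y : Type*} [tX : TopologicalSpace X] [PolishSpace X]
    [MeasurableSpace X] [BorelSpace X] [TopologicalSpace Y] [SecondCountableTopology Y]
    [MeasurableSpace Y] [OpensMeasurableSpace Y] (μ : Measure X) [SFinite μ] {f : X → Y}
    (hf : Measurable f) {S : Set X} (hS : MeasurableSet S) (hμS : μ S ≠ 0) :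
    ∃ K ⊆ S, IsCompact K ∧ μ K ≠ 0 ∧ ContinuousOn f K := by
  -- Refine the topology to make `f` continuous. This keeps the Borel sets, and on a set compact
  -- for the finer topology both topologies agree.
  obtain ⟨t, hle, hft, hpolish⟩ := hf.exists_continuous
  have hborel : @BorelSpace X t _ := by
    refine @BorelSpace.mk X t _ ?_
    rw [@borel_eq_borel_of_le X t tX hpolish inferInstance hle]
    exact BorelSpace.measurable_eq
  have hcompact {A : Set X} (hA : @IsCompact X t A) : @IsCompact X tX A := by
    simpa only [id, image_id'] using @IsCompact.image X X t tX A id hA (continuous_id_of_le hle)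
  have hpos : 0 < μ.toFinite S :=
    pos_iff_ne_zero.2 fun h => hμS (absolutelyContinuous_toFinite μ h)
  obtain ⟨K, hKS, hK, hKpos⟩ : ∃ K ⊆ S, @IsCompact X t K ∧ 0 < μ.toFinite K :=
    @MeasurableSet.exists_lt_isCompact_of_ne_top X _ μ.toFinite t _ S hS (measure_ne_top _ S) 0 hpos
  refine ⟨K, hKS, hcompact hK, fun h => hKpos.ne' (toFinite_apply_eq_zero_iff.2 h), ?_⟩
  refine (@continuousOn_iff_isClosed X Y tX _ f K).2 fun C hC => ⟨f ⁻¹' C ∩ K, ?_, ?_⟩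
  · have hclosed : @IsClosed X t (f ⁻¹' C) := @IsClosed.preimage X Y t _ f hft C hC
    exact @IsCompact.isClosed X tX _ _ (hcompact (@IsCompact.inter_left X t _ K hK hclosed))
  · rw [inter_assoc, inter_self]

section Stieltjes

variable {R : Type*} [LinearOrder R] [TopologicalSpace R] [OrderTopology R] [CompactIccSpace R]
  [MeasurableSpace R] [BorelSpace R] [SecondCountableTopology R] [DenselyOrdered R]

theorem volume_image_le_stieltjesMeasure (f : StieltjesFunction R) (s : Set R) :
    volume (f '' s) ≤ f.measure s := by
  suffices h : OuterMeasure.comap f (volume : Measure ℝ).toOuterMeasure ≤ f.outer by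
    rw [StieltjesFunction.measure_def]
    exact h s
  refine OuterMeasure.le_ofFunction.2 fun s => ?_
  rcases s.eq_empty_or_nonempty with rfl | ⟨x, -⟩
  · rw [measure_empty]
    exact zero_le
  have : Nonempty R := ⟨x⟩
  rw [StieltjesFunction.length_eq]
  refine le_iInf₂ fun a b => le_iInf fun hs => ?_
  have hsub : s ⊆ botSet ∪ Icc a b := sdiff_subset_iff.1 (hs.trans Ioc_subset_Icc_self)
  have hbot : volume (f '' botSet) = 0 := (subsingleton_botSet.image f).measure_zero volume
  calc volume (f '' s) ≤ volume (f '' botSet ∪ f '' Icc a b) := by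
        rw [← image_union]
        exact measure_mono (image_mono hsub)
    _ ≤ volume (f '' botSet) + volume (f '' Icc a b) := measure_union_le _ _
    _ = volume (f '' Icc a b) := by rw [hbot, zero_add]
    _ ≤ volume (Icc (f a) (f b)) := measure_mono f.mono.image_Icc_subset
    _ = ENNReal.ofReal (f b - f a) := Real.volume_Icc

theorem continuous_of_nullSingletonClass_stieltjesMeasure (f : StieltjesFunction R)
    [NullSingletonClass f.measure] : Continuous f := by
  refine continuous_iff_continuousAt.2 fun x => ?_
  rw [f.mono.continuousAt_iff_leftLim_eq_rightLim, f.rightLim_eq]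
  have hjump : ENNReal.ofReal (f x - Function.leftLim f x) = 0 := by
    rw [← f.measure_singleton, measure_singleton]
  exact (f.mono.leftLim_le le_rfl).antisymm (sub_nonpos.1 (ENNReal.ofReal_eq_zero.1 hjump))

end Stieltjes

section Cdf

variable (ν : Measure ℝ) [IsProbabilityMeasure ν]

theorem volume_cdf_image_le (s : Set ℝ) : volume (cdf ν '' s) ≤ ν s := by
  simpa only [measure_cdf] using volume_image_le_stieltjesMeasure (cdf ν) s

variable [NullSingletonClass ν]

theorem continuous_cdf : Continuous (cdf ν) :=
  have : NullSingletonClass (cdf ν).measure := by rwa [measure_cdf]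
  continuous_of_nullSingletonClass_stieltjesMeasure (cdf ν)

theorem Ioo_subset_range_cdf : Ioo 0 1 ⊆ range (cdf ν) := fun _ ht =>
  mem_range_of_exists_le_of_exists_ge (continuous_cdf ν)
    (((tendsto_cdf_atBot ν).eventually (gt_mem_nhds ht.1)).exists.imp fun _ => le_of_lt)
    (((tendsto_cdf_atTop ν).eventually (lt_mem_nhds ht.2)).exists.imp fun _ => le_of_lt)

theorem Ioo_subset_cdf_image {C : Set ℝ} (hC : IsCompact C) (hν : ν Cᶜ = 0) :
    Ioo 0 1 ⊆ cdf ν '' C := by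
  have hopen : IsOpen (Ioo 0 1 \ cdf ν '' C) :=
    isOpen_Ioo.sdiff (hC.image (continuous_cdf ν)).isClosed
  have hsub : Ioo 0 1 \ cdf ν '' C ⊆ cdf ν '' Cᶜ := by
    rintro _ ⟨ht, htC⟩
    obtain ⟨x, rfl⟩ := Ioo_subset_range_cdf ν ht
    exact mem_image_of_mem _ fun hx => htC (mem_image_of_mem _ hx)
  have hnull : volume (Ioo 0 1 \ cdf ν '' C) = 0 :=
    measure_mono_null hsub (le_zero_iff.1 ((volume_cdf_image_le ν _).trans_eq hν))
  exact sdiff_eq_empty.1 (hopen.eq_empty_of_measure_zero hnull)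

end Cdf

section Polish

variable {X : Type*} [TopologicalSpace X] [PolishSpace X] [MeasurableSpace X] [BorelSpace X]

theorem exists_continuousOn_isCompact_Ioo_subset_image (μ : Measure X) [SFinite μ]
    [NullSingletonClass μ] {S : Set X} (hS : MeasurableSet S) (hμS : μ S ≠ 0) :
    ∃ (g : X → ℝ) (K : Set X), K ⊆ S ∧ IsCompact K ∧ ContinuousOn g K ∧ Ioo 0 1 ⊆ g '' K ∧
      ∀ A, μ A = 0 → volume (g '' A) = 0 := by
  have he : MeasurableEmbedding (embeddingReal X) := measurableEmbedding_embeddingReal X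
  obtain ⟨K, hKS, hK, hμK, hcont⟩ := exists_isCompact_subset_continuousOn μ he.measurable hS hμS
  let P : Measure X := μ.toFinite[|K]
  have hP : IsProbabilityMeasure P :=
    cond_isProbabilityMeasure fun h => hμK (toFinite_apply_eq_zero_iff.1 h)
  have hPμ : P ≪ μ := cond_absolutelyContinuous.trans (toFinite_absolutelyContinuous μ)
  have hPK : P Kᶜ = 0 := by
    rw [cond_apply hK.measurableSet, inter_compl_self, measure_empty, mul_zero]
  let ν : Measure ℝ := P.map (embeddingReal X)
  have hν : IsProbabilityMeasure ν := Measure.isProbabilityMeasure_map he.measurable.aemeasurable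
  have hνimage (A : Set X) : ν (embeddingReal X '' A) = P A := by
    rw [he.map_apply, preimage_image_eq A he.injective]
  have hatom : NullSingletonClass ν := ⟨fun y => by
    rw [he.map_apply]
    exact hPμ ((subsingleton_singleton.preimage he.injective).measure_zero μ)⟩
  have hνK : ν (embeddingReal X '' K)ᶜ = 0 := by
    rwa [he.map_apply, preimage_compl, preimage_image_eq K he.injective]
  refine ⟨cdf ν ∘ embeddingReal X, K, hKS, hK, (continuous_cdf ν).comp_continuousOn hcont, ?_,
    fun A hA => ?_⟩
  · rw [image_comp]
    exact Ioo_subset_cdf_image ν (hK.image_of_continuousOn hcont) hνK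
  · rw [image_comp, ← le_zero_iff]
    exact (volume_cdf_image_le ν _).trans_eq ((hνimage A).trans (hPμ hA))

theorem union_iUnion_ne_univ_of_nullSingletonClass {I : Type*}
    (hcov : ∀ M : I → Set ℝ, (∀ i, IsMeagre (M i)) → ⋃ i, M i ≠ univ)
    (μ : Measure X) [SFinite μ] [NeZero μ] [NullSingletonClass μ] {F : I → Set X} {N : Set X}
    (hF : ∀ i, IsClosed (F i) ∧ μ (F i) = 0) (hN : μ N = 0) : N ∪ ⋃ i, F i ≠ univ := by
  intro huniv
  have hμS : μ (toMeasurable μ N)ᶜ ≠ 0 := by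
    rw [measure_of_measure_compl_eq_zero (by rw [compl_compl, measure_toMeasurable, hN])]
    exact NeZero.ne _
  obtain ⟨g, K, hKS, hK, hg, hsurj, hnull⟩ :=
    exists_continuousOn_isCompact_Ioo_subset_image μ (measurableSet_toMeasurable μ N).compl hμS
  have hmeagre (i : I) : IsMeagre (g '' (F i ∩ K)) :=
    have hclosed : IsClosed (g '' (F i ∩ K)) :=
      ((hK.inter_left (hF i).1).image_of_continuousOn (hg.mono inter_subset_right)).isClosed
    (IsNowhereDense.of_isClosed_null (μ := volume) hclosed
      (hnull _ (measure_inter_null_of_null_left K (hF i).2))).isMeagre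
  refine not_subset_iUnion_of_isMeagre hcov isOpen_Ioo (nonempty_Ioo.2 zero_lt_one) hmeagre
    (hsurj.trans ?_)
  rintro _ ⟨x, hxK, rfl⟩
  have hxN : x ∉ N := fun hx => hKS hxK (subset_toMeasurable μ N hx)
  obtain ⟨i, hi⟩ := mem_iUnion.1 ((huniv ▸ mem_univ x : x ∈ N ∪ ⋃ i, F i).resolve_left hxN)
  exact mem_iUnion.2 ⟨i, x, ⟨hi, hxK⟩, rfl⟩

theorem covMeager_eq_continuum_imp_star_general {I : Type*}
    (hcov : ∀ M : I → Set ℝ, (∀ i, IsMeagre (M i)) → ⋃ i, M i ≠ univ)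
    (μ : Measure X) [SFinite μ] [NeZero μ] {F : I → Set X} {N : Set X}
    (hF : ∀ i, IsClosed (F i) ∧ μ (F i) = 0) (hN : μ N = 0) : N ∪ ⋃ i, F i ≠ univ := by
  by_cases hatom : ∀ x, μ {x} = 0
  · have : NullSingletonClass μ := ⟨hatom⟩
    exact union_iUnion_ne_univ_of_nullSingletonClass hcov μ hF hN
  · -- A point of positive mass lies in no null set.
    obtain ⟨x, hx⟩ := not_forall.1 hatom
    have hmem {A : Set X} (hA : μ A = 0) : x ∉ A := fun hxA =>
      hx (measure_mono_null (singleton_subset_iff.2 hxA) hA)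
    refine (ne_univ_iff_exists_notMem _).2 ⟨x, ?_⟩
    simpa only [mem_union, mem_iUnion, not_or, not_exists] using
      ⟨hmem hN, fun i => hmem (hF i).2⟩

end Polish

/-- Assume that `ℝ` cannot be covered by fewer than continuum many meager sets
(`cov(M) = 𝔠`). Then for every positive integer `n` hypothesis (⋆) holds: fewer than continuum
many closed Lebesgue-null subsets of `ℝ^n` together with one Lebesgue-null set cannot cover
`ℝ^n`. -/
theorem covMeager_eq_continuum_imp_star
    (hcov : ∀ (I : Type) (M : I → Set ℝ),
      Cardinal.mk I < Cardinal.continuum → (∀ i, IsMeagre (M i)) →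
      (⋃ i, M i) ≠ Set.univ) :
    ∀ (n : ℕ), 0 < n →
      ∀ (I : Type) (F : I → Set (EuclideanSpace ℝ (Fin n)))
        (N : Set (EuclideanSpace ℝ (Fin n))),
        Cardinal.mk I < Cardinal.continuum →
        (∀ i, IsClosed (F i) ∧ volume (F i) = 0) →
        volume N = 0 →
        N ∪ ⋃ i, F i ≠ Set.univ := by
  intro n _ I F N hI hF hN
  exact covMeager_eq_continuum_imp_star_general (fun M => hcov I M hI) volume hF hN
end

section
/- Let (X,d) be a nonempty compact metric space, let ≤ be a linear order on X, and let C > 0 be a constant such that diam {x : a ≤ x ≤ b} ≤ C · d(a,b) for all a,b ∈ X with a ≤ b. Then (X,≤) has a least element and a greatest element. -/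
/-! For `a < b` every `y ≥ b` satisfies `dist a b ≤ C * dist a y`, because `a` and `b` both lie
between `a` and `y`. A point `y < b` violates this inequality for `a = y`, so `[b, ∞)` is an
intersection of closed sets. Rays of the same direction satisfy the finite intersection property, so
compactness gives a point common to all rays `[b, ∞)`, a greatest element; reversing the order gives
a least one. -/

open Set

/-- `X` is `C`-monotone with respect to its given order. The bound on the diameter of the interval
`[a, b]` is stated pairwise because `Metric.diam` takes the value `0` on unbounded sets. -/
def IsMonotoneSpace (X : Type*) [Dist X] [Preorder X] (C : ℝ) : Prop :=
  ∀ ⦃a b x y : X⦄, x ∈ Icc a b → y ∈ Icc a b → dist x y ≤ C * dist a b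

theorem isMonotoneSpace_iff_diam_Icc_le {X : Type*} [PseudoMetricSpace X] [BoundedSpace X]
    [Preorder X] {C : ℝ} :
    IsMonotoneSpace X C ↔ ∀ a b : X, a ≤ b → Metric.diam (Icc a b) ≤ C * dist a b where
  mp h a b hab :=
    have nonneg : 0 ≤ C * dist a b :=
      dist_nonneg.trans (h (left_mem_Icc.2 hab) (right_mem_Icc.2 hab))
    Metric.diam_le_of_forall_dist_le nonneg fun _ hx _ hy ↦ h hx hy
  mpr h a b _ _ hx hy :=
    (Metric.dist_le_diam_of_mem (Bornology.IsBounded.all _) hx hy).trans (h a b (hx.1.trans hx.2))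

namespace IsMonotoneSpace

theorem orderDual {X : Type*} [PseudoMetricSpace X] [Preorder X] {C : ℝ}
    (h : IsMonotoneSpace X C) : IsMonotoneSpace Xᵒᵈ C := fun a b _ _ hx hy ↦
  dist_comm b a ▸ h hx.symm hy.symm

variable {X : Type*} [MetricSpace X] [LinearOrder X] {C : ℝ}

theorem Ici_eq_biInter (h : IsMonotoneSpace X C) (b : X) :
    Ici b = ⋂ a ∈ Iio b, {y | dist a b ≤ C * dist a y} := by
  ext y
  simp only [mem_Ici, mem_iInter, mem_Iio, mem_ofPred_eq]
  constructor
  · intro hby a hab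
    exact h (left_mem_Icc.2 (hab.le.trans hby)) ⟨hab.le, hby⟩
  · intro hy
    by_contra! hyb
    have dist_nonpos : dist y b ≤ 0 := by simpa using hy y hyb
    exact hyb.ne (dist_le_zero.1 dist_nonpos)

theorem closedIciTopology (h : IsMonotoneSpace X C) : ClosedIciTopology X where
  isClosed_Ici b := by
    rw [h.Ici_eq_biInter b]
    exact isClosed_biInter fun a _ ↦ isClosed_le (by fun_prop) (by fun_prop)

theorem closedIicTopology (h : IsMonotoneSpace X C) : ClosedIicTopology X where
  isClosed_Iic := h.orderDual.closedIciTopology.isClosed_Ici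

end IsMonotoneSpace

/-- Let `(X,d)` be a nonempty compact metric space, `≤` a linear order on `X`,
and `C > 0` a constant such that `diam {x : a ≤ x ≤ b} ≤ C * d(a,b)` for all `a ≤ b`. Then
`(X,≤)` has a least element and a greatest element. -/
theorem compact_monotone_space_exists_min_max
    {X : Type*} [MetricSpace X] [CompactSpace X] [Nonempty X]
    (r : LinearOrder X) (C : ℝ) (hC : 0 < C)
    (hmon : ∀ a b : X, r.le a b → Metric.diam {x | r.le a x ∧ r.le x b} ≤ C * dist a b) :
    (∃ m : X, ∀ x : X, r.le m x) ∧ (∃ M : X, ∀ x : X, r.le x M) := by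
  have h : IsMonotoneSpace X C := isMonotoneSpace_iff_diam_Icc_le.2 hmon
  have := h.closedIciTopology
  have := h.closedIicTopology
  obtain ⟨m, hm⟩ := (isCompact_univ (X := X)).exists_isLeast univ_nonempty
  obtain ⟨M, hM⟩ := (isCompact_univ (X := X)).exists_isGreatest univ_nonempty
  exact ⟨⟨m, isLeast_univ_iff.1 hm⟩, ⟨M, isGreatest_univ_iff.1 hM⟩⟩
end

section
/- Let (X,d) be a compact ultrametric space with diameter D > 0. Then the relation x ~ y defined by d(x,y) < D is an equivalence relation on X with finitely many equivalence classes; each equivalence class is both open and closed; there are at least two classes; and any two points lying in distinct equivalence classes are at distance exactly D from each other. -/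
/-!
In an ultrametric space the classes of `dist x y < r` are the balls of radius `r`, which are clopen
and of which a totally bounded set meets only finitely many. What remains is that the diameter is
attained. All triangles are isosceles, so a distance `dist x y ≥ r` does not change when `x` and `y`
are moved by less than `r`, in particular when they are replaced by nearby points of a finite
`r`-net. Hence a totally bounded set has only finitely many distances `≥ r`; for `r = diam / 2`,
the largest of these is the diameter.
-/

section Ultrametric

open Metric Set

variable {X : Type*} [PseudoMetricSpace X] [IsUltrametricDist X] {x x' y y' : X} {r : ℝ} {s : Set X}

theorem equivalence_dist_lt (hr : 0 < r) : Equivalence fun x y : X => dist x y < r where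
  refl x := by rwa [dist_self]
  symm h := by rwa [dist_comm]
  trans hxy hyz := (dist_triangle_max _ _ _).trans_lt (max_lt hxy hyz)

theorem ball_eq_ball_iff_dist_lt (hr : 0 < r) : ball x r = ball y r ↔ dist x y < r :=
  ⟨fun h => mem_ball.1 (h ▸ mem_ball_self hr),
    fun h => IsUltrametricDist.ball_eq_of_mem (mem_ball'.2 h)⟩

theorem finite_image_ball_of_totallyBounded (hs : TotallyBounded s) (hr : 0 < r) :
    ((fun x => ball x r) '' s).Finite := by
  obtain ⟨t, ht, hst⟩ := totallyBounded_iff.1 hs r hr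
  refine (ht.image fun x => ball x r).subset ?_
  rintro _ ⟨x, hx, rfl⟩
  obtain ⟨p, hp, hxp⟩ := mem_iUnion₂.1 (hst hx)
  exact ⟨p, hp, IsUltrametricDist.ball_eq_of_mem hxp⟩

theorem dist_eq_of_dist_lt_dist (h : dist x x' < dist x y) : dist x' y = dist x y := by
  rw [dist_comm x x'] at h
  rw [IsUltrametricDist.dist_eq_max_of_dist_ne_dist x' x y h.ne, max_eq_right h.le]

theorem dist_eq_dist_of_dist_lt_of_le (hx : dist x x' < r) (hy : dist y y' < r)
    (hxy : r ≤ dist x y) : dist x' y' = dist x y := by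
  have hx'y : dist x' y = dist x y := dist_eq_of_dist_lt_dist (hx.trans_le hxy)
  have hyx' : dist y y' < dist y x' := by
    rw [dist_comm y x', hx'y]
    exact hy.trans_le hxy
  rw [dist_comm, dist_eq_of_dist_lt_dist hyx', dist_comm, hx'y]

theorem finite_image2_dist_inter_Ici_of_totallyBounded (hs : TotallyBounded s) (hr : 0 < r) :
    (image2 dist s s ∩ Ici r).Finite := by
  obtain ⟨t, ht, hst⟩ := totallyBounded_iff.1 hs r hr
  refine (ht.image2 dist ht).subset ?_
  rintro _ ⟨⟨x, hx, y, hy, rfl⟩, hxy⟩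
  obtain ⟨p, hp, hxp⟩ := mem_iUnion₂.1 (hst hx)
  obtain ⟨q, hq, hyq⟩ := mem_iUnion₂.1 (hst hy)
  exact ⟨p, hp, q, hq, dist_eq_dist_of_dist_lt_of_le hxp hyq hxy⟩

theorem exists_dist_eq_diam_of_totallyBounded (hs : TotallyBounded s) (hne : s.Nonempty) :
    ∃ x ∈ s, ∃ y ∈ s, dist x y = diam s := by
  obtain hdiam | hdiam := (diam_nonneg (s := s)).eq_or_lt
  · obtain ⟨x, hx⟩ := hne
    exact ⟨x, hx, x, hx, by rw [dist_self, hdiam]⟩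
  have hlarge : (image2 dist s s ∩ Ici (diam s / 2)).Nonempty := by
    by_contra! hempty
    have hsmall : ∀ x ∈ s, ∀ y ∈ s, dist x y ≤ diam s / 2 := fun x hx y hy =>
      le_of_not_ge fun h => hempty.subset ⟨mem_image2_of_mem hx hy, h⟩
    linarith [diam_le_of_forall_dist_le (half_pos hdiam).le hsmall]
  obtain ⟨_, ⟨⟨x, hx, y, hy, rfl⟩, hxy⟩, hmax⟩ :=
    exists_max_image _ id
      (finite_image2_dist_inter_Ici_of_totallyBounded hs (half_pos hdiam)) hlarge
  refine ⟨x, hx, y, hy, (dist_le_diam_of_mem hs.isBounded hx hy).antisymm ?_⟩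
  refine diam_le_of_forall_dist_le dist_nonneg fun a ha b hb => ?_
  obtain hab | hab := le_total (diam s / 2) (dist a b)
  · exact hmax _ ⟨mem_image2_of_mem ha hb, hab⟩
  · exact hab.trans hxy

theorem compact_ultrametric_diam_equivalence_classes_general
    (hX : TotallyBounded (univ : Set X)) (D : ℝ) (hD : D = diam (univ : Set X)) (hDpos : 0 < D) :
    Equivalence (fun x y : X => dist x y < D) ∧
    (range fun x : X => {y : X | dist x y < D}).Finite ∧
    (∀ x : X, IsOpen {y : X | dist x y < D} ∧ IsClosed {y : X | dist x y < D}) ∧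
    (∃ x y : X, {z : X | dist x z < D} ≠ {z : X | dist y z < D}) ∧
    (∀ x y : X, {z : X | dist x z < D} ≠ {z : X | dist y z < D} → dist x y = D) := by
  have class_eq_ball (x : X) : {y | dist x y < D} = ball x D := ext fun _ => mem_ball'.symm
  simp only [class_eq_ball, ne_eq, ball_eq_ball_iff_dist_lt hDpos, not_lt]
  refine ⟨equivalence_dist_lt hDpos, ?_, fun x => ⟨isOpen_ball, ?_⟩, ?_, fun x y hxy => ?_⟩
  · rw [← image_univ]
    exact finite_image_ball_of_totallyBounded hX hDpos
  · exact IsUltrametricDist.isClosed_ball x D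
  · have hne : (univ : Set X).Nonempty :=
      nonempty_iff_ne_empty.2 fun hempty => hDpos.ne' (by rw [hD, hempty, diam_empty])
    obtain ⟨x, -, y, -, hxy⟩ := exists_dist_eq_diam_of_totallyBounded hX hne
    exact ⟨x, y, (hD.trans hxy.symm).le⟩
  · exact (hD ▸ dist_le_diam_of_mem hX.isBounded (mem_univ x) (mem_univ y)).antisymm hxy

end Ultrametric

/-- Let `(X,d)` be a compact ultrametric space with diameter `D > 0`. Then the
relation `x ~ y` defined by `d(x,y) < D` is an equivalence relation on `X` with finitely many
equivalence classes; each equivalence class is both open and closed; there are at least two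
classes; and any two points lying in distinct equivalence classes are at distance exactly `D`. -/
theorem compact_ultrametric_diam_equivalence_classes
    {X : Type*} [MetricSpace X] [CompactSpace X] [IsUltrametricDist X]
    (D : ℝ) (hD : D = Metric.diam (Set.univ : Set X)) (hDpos : 0 < D) :
    Equivalence (fun x y : X => dist x y < D) ∧
    (Set.range fun x : X => {y : X | dist x y < D}).Finite ∧
    (∀ x : X, IsOpen {y : X | dist x y < D} ∧ IsClosed {y : X | dist x y < D}) ∧
    (∃ x y : X, {z : X | dist x z < D} ≠ {z : X | dist y z < D}) ∧
    (∀ x y : X, {z : X | dist x z < D} ≠ {z : X | dist y z < D} → dist x y = D) :=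
  compact_ultrametric_diam_equivalence_classes_general isCompact_univ.totallyBounded D hD hDpos
end
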